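/- The series γ₅ := ∑_{k=1}^∞ c(k)/k⁵ converges and equals 6ζ(5) − (9/4)ζ(4)·log 4 − 2ζ(3)ζ(2) + ζ(3)·(log 4)² − (1/6)ζ(2)·(log 4)³ + (1/120)(log 4)⁵. -/

import Mathlib

/-!
The generating function behind the identity is the infinite product
`1 + ∑_{n ≥ 1} (-1)^{n-1} γₙ sⁿ = ∏_{j ≥ 1} (1 + 2s/j)^{(-1)^{j-1}}`, whose Taylor coefficients are
polynomials in the alternating power sums `∑_j (-1)^{j-1} (2/j)^r`, that is, in `log 4` and
`(2^r - 2) ζ(r)`. The proof works with its finite truncations, and only with their Taylor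
coefficients, so that no function of `s` appears.

Put `G_N(s) = ∏_{k=1}^N (1 + s/(k - 1/2)) / (1 + s/k)`. The partial fraction expansion of `G_N` shows
that its coefficient of `sⁿ` is `(-1)^{n-1} a n N`, where
`a n N = ∑_{k=1}^N (c(k) c(N-k) / c(N)) / kⁿ`. On the other hand this coefficient is the polynomial
`(-1)^{n-1} Eₙ` in the power sums `p r N = ∑_{k=1}^N ((k - 1/2)^{-r} - k^{-r})`. Both sequences satisfy
the recursion in `N` that expresses
`(1 + s/(N+1)) G_{N+1}(s) = (1 + s/(N + 1/2)) G_N(s)` (`a_rec` for the sums), so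
they agree by induction (`a_one` to `a_five`).

As `N → ∞` the weights `c(k) c(N-k) / c(N)` tend to `c(k)` and lie in `[0, 1]` (`c_mul_le`), so
`a 5 N → γ₅` by dominated convergence (`tendsto_a`), while `p 1 N → log 4` and
`p r N → (2^r - 2) ζ(r)` for `r ≥ 2`. Euler's evaluations of `ζ(2)` and `ζ(4)` turn `ζ(2)²` into
`(5/2) ζ(4)`.
-/

/-- `c k = |binom(-1/2, k)| = binom(2k, k) / 4^k`. -/
noncomputable def c (k : ℕ) : ℝ := (Nat.choose (2 * k) k : ℝ) / 4 ^ k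

/-- `ζ(n) = ∑_{m=1}^∞ m^{-n}`. -/
noncomputable def zetaVal (n : ℕ) : ℝ := ∑' m : ℕ, 1 / (m + 1 : ℝ) ^ n

open Filter Topology Finset

/-! ### The numbers `c k` -/

lemma c_zero : c 0 = 1 := by simp [c]

lemma c_pos (k : ℕ) : 0 < c k := by
  unfold c
  have : 0 < Nat.choose (2 * k) k := Nat.choose_pos (by omega)
  positivity

lemma c_succ (k : ℕ) : c (k + 1) = (k + 1 / 2) / (k + 1) * c k := by
  have h := Nat.succ_mul_centralBinom_succ k
  unfold Nat.centralBinom at h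
  have h_cast : ((k : ℝ) + 1) * (Nat.choose (2 * (k + 1)) (k + 1) : ℝ)
      = 2 * (2 * k + 1) * (Nat.choose (2 * k) k : ℝ) := by exact_mod_cast h
  have hk : (k : ℝ) + 1 ≠ 0 := by positivity
  unfold c
  rw [pow_succ]
  field_simp
  linear_combination 2 * h_cast

/-- Supermultiplicativity of `c`: it bounds the weights `weight N k` by `1`. -/
lemma c_mul_le (k m : ℕ) : c k * c m ≤ c (k + m) := by
  induction k with
  | zero => simp [c_zero]
  | succ k ih =>
    have hr : ((k : ℝ) + 1 / 2) / (k + 1) ≤ (((k + m : ℕ) : ℝ) + 1 / 2) / ((k + m : ℕ) + 1) := by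
      rw [div_le_div_iff₀ (by positivity) (by positivity)]
      push_cast
      nlinarith [(Nat.cast_nonneg m : (0 : ℝ) ≤ m)]
    calc c (k + 1) * c m = (k + 1 / 2) / (k + 1) * (c k * c m) := by rw [c_succ]; ring
      _ ≤ (k + 1 / 2) / (k + 1) * c (k + m) := by gcongr
      _ ≤ (((k + m : ℕ) : ℝ) + 1 / 2) / ((k + m : ℕ) + 1) * c (k + m) :=
          mul_le_mul_of_nonneg_right hr (c_pos _).le
      _ = c (k + 1 + m) := by rw [← c_succ]; congr 1; omega

/-- The Cauchy square of `(1 - x)^{-1/2}` is the geometric series. -/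
lemma sum_c_mul_c (N : ℕ) : ∑ k ∈ range (N + 1), c k * c (N - k) = 1 := by
  -- By symmetry the weighted convolution is half of `N` times the convolution.
  have symm (N : ℕ) : 2 * ∑ k ∈ range (N + 1), (k : ℝ) * (c k * c (N - k))
      = N * ∑ k ∈ range (N + 1), c k * c (N - k) := by
    have h := Finset.sum_range_reflect (fun k => (k : ℝ) * (c k * c (N - k))) (N + 1)
    rw [two_mul]
    nth_rw 1 [← h]
    rw [← Finset.sum_add_distrib, Finset.mul_sum]
    refine Finset.sum_congr rfl fun k hk => ?_
    have hk' : k ≤ N := by simpa [Nat.lt_succ_iff] using hk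
    obtain ⟨m, rfl⟩ := Nat.exists_eq_add_of_le hk'
    have e1 : k + m + 1 - 1 - k = m := by omega
    have e2 : k + m - m = k := by omega
    have e3 : k + m - k = m := by omega
    simp only [e1, e2, e3]
    push_cast
    ring
  induction N with
  | zero => simp [c_zero]
  | succ N ih =>
    have h1 := symm (N + 1)
    have h2 := symm N
    rw [ih] at h2
    have h3 : ∑ k ∈ range (N + 1 + 1), (k : ℝ) * (c k * c (N + 1 - k))
        = ∑ k ∈ range (N + 1), (k : ℝ) * (c k * c (N - k))
          + 1 / 2 * ∑ k ∈ range (N + 1), c k * c (N - k) := by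
      rw [Finset.sum_range_succ', Finset.mul_sum, ← Finset.sum_add_distrib]
      simp only [Nat.cast_zero, zero_mul, add_zero]
      refine Finset.sum_congr rfl fun k _ => ?_
      have e : N + 1 - (k + 1) = N - k := by omega
      have hk : (k : ℝ) + 1 ≠ 0 := by positivity
      rw [e, c_succ]
      push_cast
      field_simp
    rw [h3, ih] at h1
    have hN : ((N + 1 : ℕ) : ℝ) ≠ 0 := by positivity
    apply mul_left_cancel₀ hN
    rw [← h1]
    push_cast
    linear_combination h2

/-! ### Partial fraction coefficients of the truncated product -/

/-- The weight `c(k+1) c(N-(k+1)) / c(N)`; up to the factor `-(k+1)` it is the residue of `G_N` at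
`s = -(k+1)`. It is only meaningful for `k < N`. -/
noncomputable def weight (N k : ℕ) : ℝ := c (k + 1) * c (N - (k + 1)) / c N

/-- Up to the sign `(-1)^{n-1}`, the coefficient of `sⁿ` in `G_N(s)`, for `n ≥ 1`. -/
noncomputable def a (n N : ℕ) : ℝ := ∑ k ∈ range N, weight N k / (k + 1 : ℝ) ^ n

lemma weight_le_one {N k : ℕ} (h : k < N) : weight N k ≤ 1 := by
  unfold weight
  rw [div_le_one (c_pos N)]
  calc _ ≤ c (k + 1 + (N - (k + 1))) := c_mul_le _ _
    _ = c N := by congr 1; omega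

lemma weight_nonneg (N k : ℕ) : 0 ≤ weight N k := by
  unfold weight
  have := c_pos (k + 1)
  have := c_pos (N - (k + 1))
  have := c_pos N
  positivity

lemma a_zero (N : ℕ) : a 0 N = 1 / c N - 1 := by
  have h := sum_c_mul_c N
  have hN := (c_pos N).ne'
  rw [Finset.sum_range_succ'] at h
  simp only [c_zero, Nat.sub_zero, one_mul] at h
  simp only [a, weight, pow_zero, div_one]
  rw [← Finset.sum_div]
  field_simp
  linear_combination h

/-- The coefficient form of `(1 + s/(N+1)) G_{N+1}(s) = (1 + s/(N+1/2)) G_N(s)`. -/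
lemma a_rec (n N : ℕ) :
    a (n + 1) (N + 1) - a n (N + 1) * (1 / (N + 1)) = a (n + 1) N - a n N * (1 / (N + 1 / 2)) := by
  unfold a
  simp only [Finset.sum_mul]
  rw [← Finset.sum_sub_distrib, ← Finset.sum_sub_distrib, Finset.sum_range_succ]
  -- The pole `s = -(N+1)` of `G_{N+1}` is cancelled by the factor `1 + s/(N+1)`.
  have hlast : weight (N + 1) N / ((N : ℝ) + 1) ^ (n + 1)
      - weight (N + 1) N / ((N : ℝ) + 1) ^ n * (1 / (N + 1)) = 0 := by
    have : (N : ℝ) + 1 ≠ 0 := by positivity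
    field_simp
    ring
  rw [hlast, add_zero]
  refine Finset.sum_congr rfl fun k hk => ?_
  obtain ⟨m, rfl⟩ := Nat.exists_eq_add_of_le (Nat.succ_le_of_lt (Finset.mem_range.1 hk))
  have e1 : k.succ + m + 1 - (k + 1) = m + 1 := by omega
  have e2 : k.succ + m - (k + 1) = m := by omega
  have hc := (c_pos (k.succ + m)).ne'
  unfold weight
  rw [e1, e2, c_succ m, c_succ (k.succ + m)]
  push_cast
  have h1 : (k : ℝ) + 1 ≠ 0 := by positivity
  have h2 : (m : ℝ) + 1 ≠ 0 := by positivity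
  have h3 : (k : ℝ) + 1 + m + 1 ≠ 0 := by positivity
  have h4 : (k : ℝ) + 1 + m + 1 / 2 ≠ 0 := by positivity
  have h5 : ((k : ℝ) + 1) * 2 + m * 2 + 1 ≠ 0 := by positivity
  have h6 : 2 * ((k : ℝ) + 1 + m) + 1 ≠ 0 := by positivity
  field_simp
  ring

/-! ### Power sums -/

/-- The power sum `∑_{j=1}^{2N} (-1)^{j-1} (2/j)^r`, with consecutive terms paired. -/
noncomputable def p (r N : ℕ) : ℝ :=
  ∑ k ∈ range N, ((1 / (k + 1 / 2 : ℝ)) ^ r - (1 / (k + 1 : ℝ)) ^ r)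

lemma p_succ (r N : ℕ) :
    p r (N + 1) = p r N + ((1 / (N + 1 / 2 : ℝ)) ^ r - (1 / (N + 1 : ℝ)) ^ r) :=
  Finset.sum_range_succ _ _

lemma a_one (N : ℕ) : a 1 N = p 1 N := by
  induction N with
  | zero => simp [a, p]
  | succ N ih =>
    have h := a_rec 0 N
    rw [zero_add, ih, a_zero, a_zero, c_succ] at h
    have hc := (c_pos N).ne'
    have h2 : (1 / (((N : ℝ) + 1 / 2) / (N + 1) * c N) - 1) * (1 / (N + 1))
        = (1 / c N) * (1 / (N + 1 / 2)) - 1 / (N + 1) := by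
      have h3 : (N : ℝ) + 1 ≠ 0 := by positivity
      have h4 : (N : ℝ) + 1 / 2 ≠ 0 := by positivity
      have h5 : 2 * (N : ℝ) + 1 ≠ 0 := by positivity
      field_simp
    rw [h2] at h
    rw [p_succ]
    linear_combination h

lemma a_two (N : ℕ) : a 2 N = -(p 1 N ^ 2 / 2 - p 2 N / 2) := by
  induction N with
  | zero => simp [a, p]
  | succ N ih =>
    have h := a_rec 1 N
    norm_num only [a_one, ih, p_succ] at h ⊢
    generalize (1 / (N + 1 / 2 : ℝ)) = u at *
    generalize (1 / (N + 1 : ℝ)) = v at *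
    linear_combination h

lemma a_three (N : ℕ) : a 3 N = p 1 N ^ 3 / 6 - p 1 N * p 2 N / 2 + p 3 N / 3 := by
  induction N with
  | zero => simp [a, p]
  | succ N ih =>
    have h := a_rec 2 N
    norm_num only [a_two, ih, p_succ] at h ⊢
    generalize (1 / (N + 1 / 2 : ℝ)) = u at *
    generalize (1 / (N + 1 : ℝ)) = v at *
    linear_combination h

lemma a_four (N : ℕ) :
    a 4 N = -(p 1 N ^ 4 / 24 - p 1 N ^ 2 * p 2 N / 4 + p 2 N ^ 2 / 8 + p 1 N * p 3 N / 3
      - p 4 N / 4) := by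
  induction N with
  | zero => simp [a, p]
  | succ N ih =>
    have h := a_rec 3 N
    norm_num only [a_three, ih, p_succ] at h ⊢
    generalize (1 / (N + 1 / 2 : ℝ)) = u at *
    generalize (1 / (N + 1 : ℝ)) = v at *
    linear_combination h

lemma a_five (N : ℕ) :
    a 5 N = p 1 N ^ 5 / 120 - p 1 N ^ 3 * p 2 N / 12 + p 1 N * p 2 N ^ 2 / 8
      + p 1 N ^ 2 * p 3 N / 6 - p 2 N * p 3 N / 6 - p 1 N * p 4 N / 4 + p 5 N / 5 := by
  induction N with
  | zero => simp [a, p]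
  | succ N ih =>
    have h := a_rec 4 N
    norm_num only [a_four, ih, p_succ] at h ⊢
    generalize (1 / (N + 1 / 2 : ℝ)) = u at *
    generalize (1 / (N + 1 : ℝ)) = v at *
    linear_combination h

/-! ### Limits of the power sums -/

lemma summable_zetaVal {r : ℕ} (hr : 2 ≤ r) : Summable fun m : ℕ => 1 / (m + 1 : ℝ) ^ r := by
  have h := (summable_nat_add_iff 1).2 (Real.summable_one_div_nat_pow.2 (by omega : 1 < r))
  simpa using h

lemma hasSum_zetaVal {r : ℕ} (hr : 2 ≤ r) :
    HasSum (fun m : ℕ => 1 / (m + 1 : ℝ) ^ r) (zetaVal r) :=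
  (summable_zetaVal hr).hasSum

/-- The sum `∑_k (k + 1/2)^{-r}` is the odd part of `2^r ζ(r)`. -/
lemma hasSum_half {r : ℕ} (hr : 2 ≤ r) :
    HasSum (fun k : ℕ => (1 / (k + 1 / 2 : ℝ)) ^ r) ((2 ^ r - 1) * zetaVal r) := by
  have hinj : Function.Injective fun k : ℕ => 2 * k := fun x y h => by simpa using h
  have hs : Summable fun k : ℕ => 1 / ((2 * k : ℕ) + 1 : ℝ) ^ r :=
    (summable_zetaVal hr).comp_injective hinj
  have hodd : HasSum (fun k : ℕ => 1 / ((2 * k + 1 : ℕ) + 1 : ℝ) ^ r)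
      ((1 / 2 ^ r) * zetaVal r) := by
    refine ((hasSum_zetaVal hr).mul_left ((1 : ℝ) / 2 ^ r)).congr_fun fun k => ?_
    rw [div_mul_div_comm, ← mul_pow]
    push_cast
    ring_nf
  have htot := HasSum.even_add_odd (f := fun m : ℕ => 1 / (m + 1 : ℝ) ^ r) hs.hasSum hodd
  have heq := htot.unique (hasSum_zetaVal hr)
  have h2 : (2 : ℝ) ^ r ≠ 0 := by positivity
  have hval : (2 ^ r - 1) * zetaVal r = 2 ^ r * ∑' k : ℕ, 1 / ((2 * k : ℕ) + 1 : ℝ) ^ r := by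
    rw [eq_sub_of_add_eq heq]
    field_simp
  rw [hval]
  refine (hs.hasSum.mul_left ((2 : ℝ) ^ r)).congr_fun fun k => ?_
  rw [mul_one_div, ← div_pow]
  push_cast
  congr 1
  have h4 : (k : ℝ) + 1 / 2 ≠ 0 := by positivity
  have h5 : 2 * (k : ℝ) + 1 ≠ 0 := by positivity
  field_simp

lemma tendsto_p {r : ℕ} (hr : 2 ≤ r) :
    Tendsto (p r) atTop (𝓝 ((2 ^ r - 2) * zetaVal r)) := by
  have h := ((hasSum_half hr).sub (hasSum_zetaVal hr)).tendsto_sum_nat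
  convert h using 1
  · funext N
    simp [p]
  · congr 1
    ring

lemma p_one_eq (N : ℕ) : p 1 N = 2 * ((harmonic (2 * N) : ℝ) - harmonic N) := by
  induction N with
  | zero => simp [p]
  | succ N ih =>
    have e : 2 * (N + 1) = 2 * N + 1 + 1 := by ring
    rw [p_succ, ih, e, harmonic_succ, harmonic_succ, harmonic_succ]
    push_cast
    have h3 : (N : ℝ) + 1 ≠ 0 := by positivity
    have h4 : 2 * (N : ℝ) + 1 ≠ 0 := by positivity
    have h5 : (N : ℝ) + 1 / 2 ≠ 0 := by positivity
    have h6 : 2 * (N : ℝ) + 1 + 1 ≠ 0 := by positivity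
    field_simp
    ring

lemma tendsto_p_one : Tendsto (p 1) atTop (𝓝 (Real.log 4)) := by
  have h := Real.tendsto_harmonic_sub_log
  have h2 : Tendsto (fun N : ℕ => 2 * N) atTop atTop :=
    tendsto_id.const_mul_atTop' (by norm_num)
  have h3 := (((h.comp h2).sub h).add_const (Real.log 2)).const_mul 2
  have h4 : Real.log 4 = 2 * Real.log 2 := by
    rw [show (4 : ℝ) = 2 ^ 2 by norm_num, Real.log_pow]
    norm_num
  rw [sub_self, zero_add, ← h4] at h3
  refine h3.congr' ?_
  filter_upwards [eventually_gt_atTop 0] with N hN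
  have hN' : (N : ℝ) ≠ 0 := by positivity
  simp only [Function.comp]
  push_cast
  rw [p_one_eq, Real.log_mul (by norm_num) hN']
  ring

/-! ### Limits of the partial fraction coefficients -/

lemma tendsto_ratio (j : ℕ) : Tendsto (fun N => c N / c (N + j)) atTop (𝓝 1) := by
  induction j with
  | zero => simp [div_self (c_pos _).ne']
  | succ j ih =>
    have hstep : Tendsto (fun N : ℕ => c N / c (N + 1)) atTop (𝓝 1) := by
      have h0 : Tendsto (fun N : ℕ => 1 + 1 / ((N : ℝ) + 1) * (((N : ℝ) + 1) / (2 * N + 1)))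
          atTop (𝓝 (1 + 0)) := by
        refine tendsto_const_nhds.add ?_
        refine squeeze_zero (fun N => by positivity) (fun N => ?_)
          (tendsto_one_div_add_atTop_nhds_zero_nat (𝕜 := ℝ))
        refine mul_le_of_le_one_right (by positivity) ?_
        rw [div_le_one (by positivity)]
        linarith [(Nat.cast_nonneg N : (0 : ℝ) ≤ N)]
      rw [add_zero] at h0
      refine h0.congr fun N => ?_
      have h3 : (N : ℝ) + 1 ≠ 0 := by positivity
      have h4 : 2 * (N : ℝ) + 1 ≠ 0 := by positivity
      have hc := (c_pos N).ne'
      rw [c_succ]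
      field_simp
      ring
    have h := ih.mul (hstep.comp (tendsto_add_atTop_nat j))
    rw [mul_one] at h
    refine h.congr fun N => ?_
    have hc := (c_pos (N + j)).ne'
    simp only [Function.comp]
    rw [div_mul_div_cancel₀ hc]
    rfl

lemma tendsto_weight (k : ℕ) : Tendsto (fun N => weight N k) atTop (𝓝 (c (k + 1))) := by
  rw [← tendsto_add_atTop_iff_nat (k + 1)]
  have h := (tendsto_ratio (k + 1)).const_mul (c (k + 1))
  rw [mul_one] at h
  refine h.congr fun N => ?_
  rw [weight, Nat.add_sub_cancel, mul_div_assoc]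

lemma tendsto_a {n : ℕ} (hn : 2 ≤ n) :
    Tendsto (a n) atTop (𝓝 (∑' k : ℕ, c (k + 1) / (k + 1 : ℝ) ^ n)) := by
  have h := tendsto_tsum_of_dominated_convergence (𝓕 := atTop)
    (f := fun N k : ℕ => if k < N then weight N k / (k + 1 : ℝ) ^ n else 0)
    (g := fun k : ℕ => c (k + 1) / (k + 1 : ℝ) ^ n)
    (summable_zetaVal hn) ?_ ?_
  · refine h.congr fun N => ?_
    rw [tsum_eq_sum (s := range N) (fun k hk => if_neg (by simpa using hk))]
    exact Finset.sum_congr rfl fun k hk => if_pos (by simpa using hk)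
  · intro k
    refine ((tendsto_weight k).div_const _).congr' ?_
    filter_upwards [eventually_gt_atTop k] with N hN
    rw [if_pos hN]
  · refine Eventually.of_forall fun N k => ?_
    have hw := weight_nonneg N k
    split_ifs with hk
    · rw [Real.norm_of_nonneg (by positivity)]
      gcongr
      exact weight_le_one hk
    · rw [norm_zero]
      positivity

lemma summable_gamma {n : ℕ} (hn : 2 ≤ n) :
    Summable fun k : ℕ => c (k + 1) / (k + 1 : ℝ) ^ n := by
  refine (summable_zetaVal hn).of_nonneg_of_le (fun k => ?_) fun k => ?_
  · have := c_pos (k + 1)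
    positivity
  · gcongr
    exact le_of_tendsto (tendsto_weight k)
      ((eventually_gt_atTop k).mono fun N hN => weight_le_one hN)

/-- A consequence of `ζ(2) = π²/6` and `ζ(4) = π⁴/90`. -/
lemma zetaVal_two_sq : zetaVal 2 ^ 2 = 5 / 2 * zetaVal 4 := by
  have key {r : ℕ} (hr : 2 ≤ r) {z : ℝ} (hz : HasSum (fun n : ℕ => 1 / (n : ℝ) ^ r) z) :
      zetaVal r = z := by
    have h0 : r ≠ 0 := by omega
    have h := (hasSum_nat_add_iff' 1).2 hz
    simp [h0] at h
    refine (hasSum_zetaVal hr).unique ?_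
    simpa using h
  rw [key le_rfl hasSum_zeta_two, key (by norm_num) hasSum_zeta_four]
  ring

/-- The series `γ₅ = ∑_{k=1}^∞ c(k)/k⁵` converges and equals
`6ζ(5) - (9/4)ζ(4)·log 4 - 2ζ(3)ζ(2) + ζ(3)·(log 4)² - (1/6)ζ(2)·(log 4)³ + (1/120)(log 4)⁵`. -/
theorem gamma_five :
    HasSum (fun k : ℕ => c (k + 1) / (k + 1 : ℝ) ^ 5)
      (6 * zetaVal 5 - (9 / 4) * zetaVal 4 * Real.log 4 - 2 * zetaVal 3 * zetaVal 2
        + zetaVal 3 * (Real.log 4) ^ 2 - (1 / 6) * zetaVal 2 * (Real.log 4) ^ 3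
        + (1 / 120) * (Real.log 4) ^ 5) := by
  have h := tendsto_a (n := 5) (by norm_num)
  have h2 := tendsto_p (r := 2) le_rfl
  have h3 := tendsto_p (r := 3) (by norm_num)
  have h4 := tendsto_p (r := 4) (by norm_num)
  have h5 := tendsto_p (r := 5) (by norm_num)
  have h1 := tendsto_p_one
  have hE := ((((((h1.pow 5).div_const 120).sub (((h1.pow 3).mul h2).div_const 12)).add
    ((h1.mul (h2.pow 2)).div_const 8)).add (((h1.pow 2).mul h3).div_const 6)).sub
    ((h2.mul h3).div_const 6)).sub ((h1.mul h4).div_const 4) |>.add (h5.div_const 5)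
  have hval := tendsto_nhds_unique h (hE.congr fun N => (a_five N).symm)
  have hs := (summable_gamma (n := 5) (by norm_num)).hasSum
  rw [hval] at hs
  convert hs using 1
  linear_combination (-Real.log 4 / 2) * zetaVal_two_sq
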